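/- The products v_{2i_1−1}⋯v_{2i_m−1} · β_{p_1q_1}⋯β_{p_rq_r} · γ_{p′_1q′_1}⋯γ_{p′_sq′_s} · α_{p″_1q″_1}⋯α_{p″_tq″_t} · u_{2j_1−1}⋯u_{2j_n−1}, taken over all m, r, s, t, n ≥ 0 and all admissible index data (with 1 ≤ p_ξ < q_ξ ≤ d, 1 ≤ p″_σ < q″_σ ≤ d, 1 ≤ p′_μ, q′_μ ≤ d, 1 ≤ i_1 ≤ ⋯ ≤ i_m ≤ d, 1 ≤ j_1 ≤ ⋯ ≤ j_n ≤ d) such that among the β-, γ- and α-factors no two intersect and no factor covers any of the v- or u-factors, are pairwise distinct and form a K-vector space basis of S^δ = ker δ_S. -/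

import Mathlib

open MvPolynomial

namespace Stmt2

/-- The polynomial ring `S = K[u_1, …, u_{2d}, v_1, …, v_{2d}]`, where the variable
`X (Sum.inl (i, 0))` is `u_{2i-1}`, `X (Sum.inl (i, 1))` is `u_{2i}`,
`X (Sum.inr (i, 0))` is `v_{2i-1}` and `X (Sum.inr (i, 1))` is `v_{2i}`. -/
abbrev S (K : Type*) [Field K] (d : ℕ) : Type _ :=
  MvPolynomial ((Fin d × Fin 2) ⊕ (Fin d × Fin 2)) K

variable (K : Type*) [Field K] (d : ℕ)

noncomputable def u (j : Fin d × Fin 2) : S K d := X (Sum.inl j)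

noncomputable def v (j : Fin d × Fin 2) : S K d := X (Sum.inr j)

/-- `α_{pq} = u_{2p-1} u_{2q} - u_{2p} u_{2q-1}`. -/
noncomputable def α (p q : Fin d) : S K d :=
  u K d (p, 0) * u K d (q, 1) - u K d (p, 1) * u K d (q, 0)

/-- `β_{pq} = v_{2p-1} v_{2q} - v_{2p} v_{2q-1}`. -/
noncomputable def β (p q : Fin d) : S K d :=
  v K d (p, 0) * v K d (q, 1) - v K d (p, 1) * v K d (q, 0)

/-- `γ_{pq} = u_{2p-1} v_{2q} - u_{2p} v_{2q-1}`. -/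
noncomputable def γ (p q : Fin d) : S K d :=
  u K d (p, 0) * v K d (q, 1) - u K d (p, 1) * v K d (q, 0)

/-- The open interval (with integer endpoints, recorded as the pair of its endpoints)
`(p, q)` on the real line associated to the factor `α_{pq}` (indices are `1`-based). -/
def αInt (pq : Fin d × Fin d) : ℕ × ℕ := (pq.1.val + 1, pq.2.val + 1)

/-- The open interval `(p + d, q + d)` associated to the factor `β_{pq}`. -/
def βInt (pq : Fin d × Fin d) : ℕ × ℕ := (pq.1.val + 1 + d, pq.2.val + 1 + d)

/-- The open interval `(p, q + d)` associated to the factor `γ_{pq}`. -/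
def γInt (pq : Fin d × Fin d) : ℕ × ℕ := (pq.1.val + 1, pq.2.val + 1 + d)

/-- The point `j` associated to the factor `u_{2j-1}`. -/
def uPt (j : Fin d) : ℕ := j.val + 1

/-- The point `i + d` associated to the factor `v_{2i-1}`. -/
def vPt (i : Fin d) : ℕ := i.val + 1 + d

/-- The open intervals `(I.1, I.2)` and `(J.1, J.2)` have nonempty intersection. -/
def Meets (I J : ℕ × ℕ) : Prop := max I.1 J.1 < min I.2 J.2

/-- The open interval `(I.1, I.2)` is contained in the open interval `(J.1, J.2)`. -/
def Inside (I J : ℕ × ℕ) : Prop := J.1 ≤ I.1 ∧ I.2 ≤ J.2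

/-- Two factors *intersect* if the corresponding open intervals have nonempty
intersection and neither is contained in the other. -/
def Intersects (I J : ℕ × ℕ) : Prop := Meets I J ∧ ¬ Inside I J ∧ ¬ Inside J I

/-- A factor *covers* a point `p` if its open interval contains `p`. -/
def Covers (I : ℕ × ℕ) (p : ℕ) : Prop := I.1 < p ∧ p < I.2

/-- The admissible index data: multisets of indices for the factors
`v_{2i-1}`, `β_{pq}`, `γ_{p'q'}`, `α_{p''q''}`, `u_{2j-1}` (using multisets fixes once and
for all the order of the pairs of indices in each group), such that among the `β`-, `γ`-
and `α`-factors no two intersect and no factor covers any of the `v`- or `u`-points. -/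
structure Datum (d : ℕ) where
  vs : Multiset (Fin d)
  betas : Multiset (Fin d × Fin d)
  gammas : Multiset (Fin d × Fin d)
  alphas : Multiset (Fin d × Fin d)
  us : Multiset (Fin d)
  betas_lt : ∀ pq ∈ betas, pq.1 < pq.2
  alphas_lt : ∀ pq ∈ alphas, pq.1 < pq.2
  no_intersect : ∀ I ∈ betas.map (βInt d) + gammas.map (γInt d) + alphas.map (αInt d),
    ∀ J ∈ betas.map (βInt d) + gammas.map (γInt d) + alphas.map (αInt d),
      ¬ Intersects I J
  no_cover : ∀ I ∈ betas.map (βInt d) + gammas.map (γInt d) + alphas.map (αInt d),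
    ∀ p ∈ vs.map (vPt d) + us.map (uPt d), ¬ Covers I p

/-- The product
`v_{2i_1-1} ⋯ v_{2i_m-1} · β_{p_1q_1} ⋯ β_{p_rq_r} · γ_{p'_1q'_1} ⋯ γ_{p'_sq'_s} ·
α_{p''_1q''_1} ⋯ α_{p''_tq''_t} · u_{2j_1-1} ⋯ u_{2j_n-1}` associated to a datum. -/
noncomputable def Datum.toElem (t : Datum d) : S K d :=
  (t.vs.map fun i => v K d (i, 0)).prod *
    (t.betas.map fun pq => β K d pq.1 pq.2).prod *
    (t.gammas.map fun pq => γ K d pq.1 pq.2).prod *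
    (t.alphas.map fun pq => α K d pq.1 pq.2).prod *
    (t.us.map fun j => u K d (j, 0)).prod

/-!
Place the variables at points on a line, the index `i` of the `u`-variables at `i` and that of the
`v`-variables at `d + i`, and write `x i`, `y i` for the two variables at the point `i`. Then
`δ_S = ∑ x i ∂/∂(y i)`, the factors `α`, `β`, `γ` are the minors `x i * y j - y i * x j` with
`i < j`, and admissible data are noncrossing configurations of brackets `(i, j)` and free points.

In the lexicographic order in which the `y i` with large `i` come first, the leading monomial of
such a product is the product of `x i` over the left ends and free points and of `y j` over the
right ends. Matching brackets recovers a noncrossing configuration from these multisets of ends,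
so distinct products have distinct leading monomials, and an exponent `m` occurs as soon as the
ballot condition `∑ j ≤ c, m (y j) ≤ ∑ j < c, m (x j)` holds for all `c`. It remains to see that
the leading exponent of every nonzero `p` in the kernel is ballot. If `n` is the `y b`-degree of
`p` for the last point `b`, then the top coefficient of `p` in `y b` is again killed by `δ`
restricted to the points before `b`, which gives the condition for `c < b` by induction; and it
is, up to the factor `(-x b) ^ n`, the `n`-th iterate on `p` of the restricted derivation, whose
`(n + 1)`-st iterate kills `p`. The restricted derivation is the raising operator of an
`sl₂`-action, where this forces weight at least `n`, which is the condition for `c = b`.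
-/

section Noncrossing

variable {ι : Type*} [LinearOrder ι]

/-- A multiset of brackets `(p, q)`, `p < q`, no two of which cross, together with a multiset of
free points, none of which lies strictly inside a bracket. -/
structure IsNoncrossing (brackets : Multiset (ι × ι)) (free : Multiset ι) : Prop where
  fst_lt_snd : ∀ p ∈ brackets, p.1 < p.2
  not_cross : ∀ p ∈ brackets, ∀ q ∈ brackets, ¬ (p.1 < q.1 ∧ q.1 < p.2 ∧ p.2 < q.2)
  not_cover : ∀ p ∈ brackets, ∀ c ∈ free, ¬ (p.1 < c ∧ c < p.2)

/-- `b` is the smallest element of `B` and `a` is the largest element of `A` below `b`. When `A`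
consists of the left ends and free points and `B` of the right ends of a noncrossing configuration,
`(a, b)` is an innermost bracket of it. -/
structure IsInnermostPair (A B : Multiset ι) (a b : ι) : Prop where
  left_mem : a ∈ A
  right_mem : b ∈ B
  lt : a < b
  le_left : ∀ c ∈ A, c < b → c ≤ a
  right_le : ∀ c ∈ B, b ≤ c

lemma exists_isInnermostPair {A B : Multiset ι} (hB : B ≠ 0) (hAB : ∀ b ∈ B, ∃ a ∈ A, a < b) :
    ∃ a b, IsInnermostPair A B a b := by
  obtain ⟨b, hb, hmin⟩ := Multiset.exists_max_image OrderDual.toDual hB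
  obtain ⟨a₀, ha₀, ha₀b⟩ := hAB b hb
  have hne : A.filter (· < b) ≠ 0 := fun h =>
    Multiset.notMem_zero a₀ (h ▸ Multiset.mem_filter.2 ⟨ha₀, ha₀b⟩)
  obtain ⟨a, ha, hmax⟩ := Multiset.exists_max_image id hne
  obtain ⟨haA, hab⟩ := Multiset.mem_filter.1 ha
  exact ⟨a, b, haA, hb, hab, fun c hc hcb => hmax c (Multiset.mem_filter.2 ⟨hc, hcb⟩), hmin⟩

namespace IsNoncrossing

variable {brackets brackets' : Multiset (ι × ι)} {free free' : Multiset ι} {a b : ι}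

lemma zero (free : Multiset ι) : IsNoncrossing 0 free :=
  ⟨by simp, by simp, by simp⟩

lemma of_cons {p : ι × ι} (h : IsNoncrossing (p ::ₘ brackets) free) :
    IsNoncrossing brackets free where
  fst_lt_snd q hq := h.fst_lt_snd q (Multiset.mem_cons_of_mem hq)
  not_cross q hq r hr :=
    h.not_cross q (Multiset.mem_cons_of_mem hq) r (Multiset.mem_cons_of_mem hr)
  not_cover q hq := h.not_cover q (Multiset.mem_cons_of_mem hq)

lemma cons (h : IsNoncrossing brackets free)
    (hab : IsInnermostPair (a ::ₘ (brackets.map Prod.fst + free))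
      (b ::ₘ brackets.map Prod.snd) a b) :
    IsNoncrossing ((a, b) ::ₘ brackets) free := by
  have fst_le : ∀ q ∈ brackets, q.1 < b → q.1 ≤ a := fun q hq =>
    hab.le_left _ (Multiset.mem_cons_of_mem
      (Multiset.mem_add.2 (.inl (Multiset.mem_map_of_mem _ hq))))
  have le_snd : ∀ q ∈ brackets, b ≤ q.2 := fun q hq =>
    hab.right_le _ (Multiset.mem_cons_of_mem (Multiset.mem_map_of_mem _ hq))
  have free_le : ∀ c ∈ free, c < b → c ≤ a := fun c hc =>
    hab.le_left _ (Multiset.mem_cons_of_mem (Multiset.mem_add.2 (.inr hc)))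
  refine ⟨?_, ?_, ?_⟩
  · exact Multiset.forall_mem_cons.2 ⟨hab.lt, h.fst_lt_snd⟩
  · simp only [Multiset.forall_mem_cons]
    refine ⟨⟨fun hlt => lt_irrefl _ hlt.1, fun q hq hlt => ?_⟩, fun p hp => ⟨fun hlt => ?_, ?_⟩⟩
    · exact (fst_le q hq hlt.2.1).not_gt hlt.1
    · exact (le_snd p hp).not_gt hlt.2.2
    · exact h.not_cross p hp
  · refine Multiset.forall_mem_cons.2 ⟨fun c hc hlt => ?_, h.not_cover⟩
    exact (free_le c hc hlt.2).not_gt hlt.1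

lemma mem_of_isInnermostPair (h : IsNoncrossing brackets free)
    (hab : IsInnermostPair (brackets.map Prod.fst + free) (brackets.map Prod.snd) a b) :
    (a, b) ∈ brackets := by
  obtain ⟨⟨a', b⟩, hp, rfl⟩ := Multiset.mem_map.1 hab.right_mem
  have ha' : a' ≤ a := hab.le_left a'
    (Multiset.mem_add.2 (.inl (Multiset.mem_map_of_mem Prod.fst hp))) (h.fst_lt_snd _ hp)
  rcases ha'.eq_or_lt with rfl | ha'
  · exact hp
  rcases Multiset.mem_add.1 hab.left_mem with ha | ha
  · obtain ⟨⟨a, c⟩, hq, rfl⟩ := Multiset.mem_map.1 ha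
    rcases (hab.right_le c (Multiset.mem_map_of_mem Prod.snd hq)).eq_or_lt with rfl | hbc
    · exact hq
    · exact absurd ⟨ha', hab.lt, hbc⟩ (h.not_cross _ hp _ hq)
  · exact absurd ⟨ha', hab.lt⟩ (h.not_cover _ hp _ ha)

theorem eq_of_endpoints_eq (h : IsNoncrossing brackets free) (h' : IsNoncrossing brackets' free')
    (hleft : brackets.map Prod.fst + free = brackets'.map Prod.fst + free')
    (hright : brackets.map Prod.snd = brackets'.map Prod.snd) :
    brackets = brackets' ∧ free = free' := by
  induction brackets using Multiset.strongInductionOn generalizing brackets' with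
  | ih brackets ih =>
  rcases eq_or_ne brackets 0 with rfl | hne
  · obtain rfl : brackets' = 0 := by simpa using hright.symm
    simpa using hleft
  · obtain ⟨a, b, hab⟩ : ∃ a b, IsInnermostPair (brackets.map Prod.fst + free)
        (brackets.map Prod.snd) a b := by
      refine exists_isInnermostPair (by simpa using hne) fun b hb => ?_
      obtain ⟨p, hp, rfl⟩ := Multiset.mem_map.1 hb
      exact ⟨p.1, Multiset.mem_add.2 (.inl (Multiset.mem_map_of_mem _ hp)), h.fst_lt_snd p hp⟩
    obtain ⟨s, rfl⟩ := Multiset.exists_cons_of_mem (h.mem_of_isInnermostPair hab)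
    rw [hleft, hright] at hab
    obtain ⟨s', rfl⟩ := Multiset.exists_cons_of_mem (h'.mem_of_isInnermostPair hab)
    obtain ⟨rfl, rfl⟩ := ih s (Multiset.lt_cons_self _ _) h.of_cons h'.of_cons
      (by simpa using hleft) (by simpa using hright)
    exact ⟨rfl, rfl⟩

end IsNoncrossing

lemma countP_le_countP_of_cons {A B : Multiset ι} {a b : ι}
    (hab : IsInnermostPair (a ::ₘ A) (b ::ₘ B) a b)
    (h : ∀ c, (b ::ₘ B).countP (· ≤ c) ≤ (a ::ₘ A).countP (· < c)) (c : ι) :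
    B.countP (· ≤ c) ≤ A.countP (· < c) := by
  by_cases hbc : b ≤ c
  · simpa [hbc, hab.lt.trans_le hbc] using h c
  · have : B.countP (· ≤ c) = 0 := Multiset.countP_eq_zero.2 fun e he hec =>
      hbc ((hab.right_le e (Multiset.mem_cons_of_mem he)).trans hec)
    omega

theorem exists_isNoncrossing_of_countP_le {A B : Multiset ι}
    (h : ∀ c, B.countP (· ≤ c) ≤ A.countP (· < c)) :
    ∃ brackets free, IsNoncrossing brackets free ∧ brackets.map Prod.fst + free = A ∧
      brackets.map Prod.snd = B := by
  induction B using Multiset.strongInductionOn generalizing A with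
  | ih B ih =>
  rcases eq_or_ne B 0 with rfl | hB
  · exact ⟨0, A, .zero A, by simp, by simp⟩
  · obtain ⟨a, b, hab⟩ : ∃ a b, IsInnermostPair A B a b := by
      refine exists_isInnermostPair hB fun b hb => Multiset.countP_pos.1 ?_
      exact (h b).trans_lt' (Multiset.countP_pos_of_mem hb le_rfl)
    obtain ⟨A, rfl⟩ := Multiset.exists_cons_of_mem hab.left_mem
    obtain ⟨B, rfl⟩ := Multiset.exists_cons_of_mem hab.right_mem
    obtain ⟨brackets, free, hnc, rfl, rfl⟩ :=
      ih B (Multiset.lt_cons_self _ _) (countP_le_countP_of_cons hab h)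
    exact ⟨(a, b) ::ₘ brackets, free, hnc.cons hab, by simp, by simp⟩

end Noncrossing

section Sl2

-- `IsSl2Triple` requires `h ≠ 0`, which fails for the action attached to the empty set of points.

variable {k L M : Type*} [CommRing k] [LieRing L] [LieAlgebra k L] [AddCommGroup M] [Module k M]
  [LieRingModule L M] [LieModule k L M] {h e f : L} {x : M}

lemma lie_iterate_of_lie_eq_smul (hhe : ⁅h, e⁆ = 2 • e) {μ : k} (hx : ⁅h, x⁆ = μ • x) (n : ℕ) :
    ⁅h, (⁅e, ·⁆)^[n] x⁆ = (μ + 2 * n) • (⁅e, ·⁆)^[n] x := by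
  induction n with
  | zero => simp [hx]
  | succ n ih =>
    rw [Function.iterate_succ_apply', leibniz_lie, hhe, ih, nsmul_lie, lie_smul]
    push_cast
    module

lemma iterate_lie_lie_of_lie_eq_smul (hef : ⁅e, f⁆ = h) (hhe : ⁅h, e⁆ = 2 • e) {μ : k}
    (hx : ⁅h, x⁆ = μ • x) (n : ℕ) :
    (⁅e, ·⁆)^[n + 1] ⁅f, x⁆ =
      ⁅f, (⁅e, ·⁆)^[n + 1] x⁆ + ((n + 1) * (μ + n)) • (⁅e, ·⁆)^[n] x := by
  induction n with
  | zero => simp [leibniz_lie e f, hef, hx, add_comm]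
  | succ n ih =>
    rw [Function.iterate_succ_apply', ih, lie_add, leibniz_lie e f, hef, lie_smul,
      lie_iterate_of_lie_eq_smul hhe hx, Function.iterate_succ_apply' _ (n + 1),
      Function.iterate_succ_apply' _ n]
    push_cast
    module

variable [IsDomain k] [CharZero k] [Module.IsTorsionFree k M]

lemma eq_zero_of_lie_eq_zero_of_iterate_lie_eq_zero (hef : ⁅e, f⁆ = h) (hhe : ⁅h, e⁆ = 2 • e)
    {m : ℕ} (hx : ⁅h, x⁆ = -(m : k) • x) (hfx : ⁅f, x⁆ = 0) {n : ℕ} (hn : n ≤ m)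
    (hex : (⁅e, ·⁆)^[n] x = 0) : x = 0 := by
  induction n with
  | zero => exact hex
  | succ n ih =>
    have hcomm := iterate_lie_lie_of_lie_eq_smul hef hhe hx n
    rw [hfx, hex, lie_zero, zero_add, Function.iterate_fixed (lie_zero e)] at hcomm
    refine ih (by omega) ((smul_eq_zero.1 hcomm.symm).resolve_left ?_)
    refine mul_ne_zero n.cast_add_one_ne_zero ?_
    rw [neg_add_eq_sub]
    exact sub_ne_zero.2 (Nat.cast_injective.ne (by omega))

theorem eq_zero_of_iterate_lie_eq_zero (hef : ⁅e, f⁆ = h) (hhe : ⁅h, e⁆ = 2 • e)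
    (hhf : ⁅h, f⁆ = -(2 • f)) {m n N : ℕ} (hx : ⁅h, x⁆ = -(m : k) • x) (hn : n ≤ m)
    (hex : (⁅e, ·⁆)^[n] x = 0) (hfx : (⁅f, ·⁆)^[N] x = 0) : x = 0 := by
  induction N generalizing m n x with
  | zero => exact hfx
  | succ N ih =>
    have hweight : ⁅h, ⁅f, x⁆⁆ = -((m + 2 : ℕ) : k) • ⁅f, x⁆ := by
      rw [leibniz_lie, hhf, hx, neg_lie, nsmul_lie, lie_smul]
      push_cast
      module
    have hraise : (⁅e, ·⁆)^[n + 1] ⁅f, x⁆ = 0 := by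
      rw [iterate_lie_lie_of_lie_eq_smul hef hhe hx, Function.iterate_succ_apply', hex]
      simp
    exact eq_zero_of_lie_eq_zero_of_iterate_lie_eq_zero hef hhe hx
      (ih hweight (by omega) hraise hfx) hn hex

end Sl2

section WeightedHomogeneous

variable {σ R M : Type*} [CommRing R]

lemma derivation_monomial (D : Derivation R (MvPolynomial σ R) (MvPolynomial σ R)) (m : σ →₀ ℕ)
    (r : R) :
    D (monomial m r) =
      r • m.sum fun i n => monomial (m - Finsupp.single i 1) (n : R) * D (X i) := by
  have hD : D = mkDerivation R fun i => D (X i) :=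
    derivation_ext fun i => (mkDerivation_X R (fun i => D (X i)) i).symm
  exact (congrArg (· (monomial m r)) hD).trans (mkDerivation_monomial R _ m r)

section Shift

variable [AddCommGroup M] {w : σ → M} {c : M}
  {D : Derivation R (MvPolynomial σ R) (MvPolynomial σ R)}

lemma isWeightedHomogeneous_derivation (hD : ∀ i, IsWeightedHomogeneous w (D (X i)) (w i + c))
    {p : MvPolynomial σ R} {n : M} (hp : IsWeightedHomogeneous w p n) :
    IsWeightedHomogeneous w (D p) (n + c) := by
  rw [p.as_sum, map_sum]
  refine IsWeightedHomogeneous.sum _ _ _ fun m hm => ?_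
  rw [derivation_monomial, smul_eq_C_mul, Finsupp.sum]
  refine (IsWeightedHomogeneous.sum _ _ _ fun i hi => ?_).C_mul _
  have hweight : Finsupp.weight w (m - Finsupp.single i 1) + (w i + c) = n + c := by
    rw [← add_assoc, Finsupp.weight_sub_single_add (Finsupp.mem_support_iff.1 hi),
      hp (mem_support_iff.1 hm)]
  exact hweight ▸ (isWeightedHomogeneous_monomial w _ _ rfl).mul (hD i)

lemma derivation_weightedHomogeneousComponent
    (hD : ∀ i, IsWeightedHomogeneous w (D (X i)) (w i + c)) (p : MvPolynomial σ R) (n : M) :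
    D (weightedHomogeneousComponent w n p) = weightedHomogeneousComponent w (n + c) (D p) := by
  induction p using MvPolynomial.induction_on' with
  | monomial m r =>
    have hm := isWeightedHomogeneous_monomial w m r rfl
    have hDm := isWeightedHomogeneous_derivation hD hm
    rcases eq_or_ne n (Finsupp.weight w m) with rfl | hne
    · rw [hm.weightedHomogeneousComponent_same, hDm.weightedHomogeneousComponent_same]
    · rw [hm.weightedHomogeneousComponent_ne n hne, map_zero,
        hDm.weightedHomogeneousComponent_ne _ (add_left_injective c |>.ne hne)]
  | add p q ihp ihq => simp only [map_add, ihp, ihq]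

lemma iterate_derivation_weightedHomogeneousComponent
    (hD : ∀ i, IsWeightedHomogeneous w (D (X i)) (w i + c)) (p : MvPolynomial σ R) (n : M)
    (N : ℕ) :
    D^[N] (weightedHomogeneousComponent w n p) =
      weightedHomogeneousComponent w (n + N • c) (D^[N] p) := by
  induction N with
  | zero => simp
  | succ N ih =>
    rw [Function.iterate_succ_apply', ih, derivation_weightedHomogeneousComponent hD,
      Function.iterate_succ_apply', succ_nsmul, add_assoc]

end Shift

lemma coeff_weightedHomogeneousComponent_weight [AddCommMonoid M] (w : σ → M)
    (p : MvPolynomial σ R) (m : σ →₀ ℕ) :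
    coeff m (weightedHomogeneousComponent w (Finsupp.weight w m) p) = coeff m p := by
  classical rw [coeff_weightedHomogeneousComponent, if_pos rfl]

theorem exists_iterate_derivation_eq_zero {w : σ → ℤ} (hw : 0 ≤ w)
    {D : Derivation R (MvPolynomial σ R) (MvPolynomial σ R)}
    (hD : ∀ i, IsWeightedHomogeneous w (D (X i)) (w i - 1)) (p : MvPolynomial σ R) :
    ∃ N, D^[N] p = 0 := by
  obtain ⟨B, hB⟩ := (p.support.image (Finsupp.weight w)).bddAbove
  refine ⟨(B + 1).toNat, ext _ _ fun m => ?_⟩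
  have hm : 0 ≤ Finsupp.weight w m := by
    rw [Finsupp.weight_apply]
    exact Finset.sum_nonneg fun i _ => nsmul_nonneg (hw i) _
  have hshift : Finsupp.weight w m =
      Finsupp.weight w m + (B + 1).toNat + (B + 1).toNat • (-1) := by simp
  rw [← coeff_weightedHomogeneousComponent_weight w, hshift,
    ← iterate_derivation_weightedHomogeneousComponent hD,
    weightedHomogeneousComponent_eq_zero', iterate_map_zero, coeff_zero]
  intro m' hm' heq
  have := hB (Finset.mem_coe.2 (Finset.mem_image_of_mem _ hm'))
  omega

/-- The derivation scaling each variable by its weight; it is multiplication by `n` on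
polynomials of weight `n`. -/
noncomputable def weightDerivation (R : Type*) [CommRing R] (w : σ → ℤ) :
    Derivation R (MvPolynomial σ R) (MvPolynomial σ R) :=
  mkDerivation R fun i => w i • X i

@[simp]
lemma weightDerivation_X (w : σ → ℤ) (i : σ) : weightDerivation R w (X i) = w i • X i :=
  mkDerivation_X _ _ _

lemma weightDerivation_apply {w : σ → ℤ} {p : MvPolynomial σ R} {n : ℤ}
    (hp : IsWeightedHomogeneous w p n) : weightDerivation R w p = (n : R) • p := by
  induction hp using IsWeightedHomogeneous.induction_on with
  | zero => simp
  | add p q _ _ ihp ihq => rw [map_add, ihp, ihq, smul_add]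
  | monomial m r hm =>
    have hterm : ∀ i ∈ m.support, monomial (m - Finsupp.single i 1) (m i : R) *
        weightDerivation R w (X i) = monomial m ((m i • w i : ℤ) : R) := fun i hi => by
      rw [weightDerivation_X, mul_smul_comm, X, monomial_mul, tsub_add_cancel_of_le, smul_monomial]
      · simp [mul_comm]
      · simpa [Nat.one_le_iff_ne_zero] using hi
    rw [derivation_monomial, Finsupp.sum, Finset.sum_congr rfl hterm, ← map_sum, ← Int.cast_sum,
      ← hm, Finsupp.weight_apply, Finsupp.sum, smul_monomial, smul_monomial, smul_eq_mul,
      smul_eq_mul, mul_comm]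

end WeightedHomogeneous

section IteratedDerivation

variable {R A : Type*} [CommRing R] [CommRing A] [Algebra R A] {D D' : Derivation R A A} {a p : A}

lemma derivation_iterate_of_derivation_eq_mul (hcomm : Function.Commute D D') (hD'a : D' a = 0)
    (hp : D p = a * D' p) (n : ℕ) : D (D'^[n] p) = a * D'^[n + 1] p := by
  have hmul : Function.Commute D' (a * ·) := fun q => by simp [hD'a]
  rw [hcomm.iterate_right n p, hp, Function.iterate_succ_apply]
  exact hmul.iterate_left n (D' p)

lemma iterate_derivation_of_derivation_eq_mul (hcomm : Function.Commute D D') (hDa : D a = 0)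
    (hD'a : D' a = 0) (hp : D p = a * D' p) (n : ℕ) : D^[n] p = a ^ n * D'^[n] p := by
  induction n with
  | zero => simp
  | succ n ih =>
    calc D^[n + 1] p = D (a ^ n * D'^[n] p) := by rw [Function.iterate_succ_apply', ih]
      _ = a ^ n * D (D'^[n] p) := by simp [hDa, Derivation.leibniz_pow]
      _ = a ^ (n + 1) * D'^[n + 1] p := by
        rw [derivation_iterate_of_derivation_eq_mul hcomm hD'a hp, pow_succ, mul_assoc]

lemma coeff_iterate_pderiv_ne_zero_iff {σ : Type*} [IsDomain R] [CharZero R] {i : σ} {n : ℕ}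
    {m : σ →₀ ℕ} {p : MvPolynomial σ R} :
    coeff m ((pderiv i)^[n] p) ≠ 0 ↔ coeff (m + Finsupp.single i n) p ≠ 0 := by
  induction n generalizing m with
  | zero => simp
  | succ n ih =>
    rw [Function.iterate_succ_apply', coeff_pderiv,
      mul_ne_zero_iff_right (Nat.cast_add_one_ne_zero _), ih, add_assoc, ← Finsupp.single_add,
      add_comm 1 n]

end IteratedDerivation

/-- The variables `x i`, `y i` attached to the points `i : ι`. -/
inductive PairVar (ι : Type*)
  | x (i : ι)
  | y (i : ι)

namespace PairVar

variable {ι : Type*}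

lemma x_injective : Function.Injective (x : ι → PairVar ι) := fun _ _ => x.inj

lemma y_injective : Function.Injective (y : ι → PairVar ι) := fun _ _ => y.inj

/-- Lists the `y i` in decreasing and then the `x i` in increasing order of `i`. -/
def toLexSum : PairVar ι → ιᵒᵈ ⊕ₗ ι
  | x i => Sum.inrₗ i
  | y i => Sum.inlₗ (OrderDual.toDual i)

lemma toLexSum_injective : Function.Injective (toLexSum (ι := ι)) := by
  rintro (i | i) (j | j) h <;> simp_all [toLexSum]

instance [Finite ι] : Finite (PairVar ι) :=
  .of_injective (fun i => ofLex i.toLexSum) (ofLex.injective.comp toLexSum_injective)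

variable [LinearOrder ι]

noncomputable instance : LinearOrder (PairVar ι) :=
  LinearOrder.lift' toLexSum toLexSum_injective

lemma lt_y_iff {a : PairVar ι} {j : ι} : a < y j ↔ ∃ i, j < i ∧ a = y i := by
  change a.toLexSum < _ ↔ _
  rcases a with i | i <;> simp [toLexSum]

end PairVar

section Raising

variable {ι : Type*} [DecidableEq ι] (k : Type*) [CommRing k] (J : Finset ι)

/-- The derivation `∑ i ∈ J, x i ∂/∂(y i)`; for `J` the set of all points it is the derivation
whose kernel is sought. -/
noncomputable def raising :
    Derivation k (MvPolynomial (PairVar ι) k) (MvPolynomial (PairVar ι) k) :=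
  mkDerivation k fun
    | .x _ => 0
    | .y i => if i ∈ J then X (.x i) else 0

/-- The derivation `∑ i ∈ J, y i ∂/∂(x i)`. -/
noncomputable def lowering :
    Derivation k (MvPolynomial (PairVar ι) k) (MvPolynomial (PairVar ι) k) :=
  mkDerivation k fun
    | .x i => if i ∈ J then X (.y i) else 0
    | .y _ => 0

/-- The weight for the action of `raising k J` and `lowering k J`. -/
def pairWeight : PairVar ι → ℤ
  | .x i => if i ∈ J then 1 else 0
  | .y i => if i ∈ J then -1 else 0

@[simp]
lemma raising_x (i : ι) : raising k J (X (.x i)) = 0 := mkDerivation_X _ _ _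

@[simp]
lemma raising_y (i : ι) : raising k J (X (.y i)) = if i ∈ J then X (.x i) else 0 :=
  mkDerivation_X _ _ _

@[simp]
lemma lowering_x (i : ι) : lowering k J (X (.x i)) = if i ∈ J then X (.y i) else 0 :=
  mkDerivation_X _ _ _

@[simp]
lemma lowering_y (i : ι) : lowering k J (X (.y i)) = 0 := mkDerivation_X _ _ _

lemma lie_raising_lowering : ⁅raising k J, lowering k J⁆ = weightDerivation k (pairWeight J) := by
  refine derivation_ext ?_
  rintro (i | i) <;> by_cases hi : i ∈ J <;> simp [Derivation.commutator_apply, pairWeight, hi]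

lemma lie_weightDerivation_raising :
    ⁅weightDerivation k (pairWeight J), raising k J⁆ = 2 • raising k J := by
  refine derivation_ext ?_
  rintro (i | i) <;> by_cases hi : i ∈ J <;>
    simp [Derivation.commutator_apply, pairWeight, hi, two_mul]

lemma lie_weightDerivation_lowering :
    ⁅weightDerivation k (pairWeight J), lowering k J⁆ = -(2 • lowering k J) := by
  refine derivation_ext ?_
  rintro (i | i) <;> by_cases hi : i ∈ J <;>
    simp [Derivation.commutator_apply, pairWeight, hi, two_mul, sub_eq_add_neg]

lemma isWeightedHomogeneous_raising_X (i : PairVar ι) :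
    IsWeightedHomogeneous (pairWeight J) (raising k J (X i)) (pairWeight J i + 2) := by
  rcases i with i | i
  · simpa using isWeightedHomogeneous_zero k _ _
  · by_cases hi : i ∈ J
    · simpa [pairWeight, hi] using isWeightedHomogeneous_X k (pairWeight J) (.x i)
    · simpa [hi] using isWeightedHomogeneous_zero k _ _

lemma exists_iterate_lowering_eq_zero (p : MvPolynomial (PairVar ι) k) :
    ∃ N, (lowering k J)^[N] p = 0 := by
  let xWeight : PairVar ι → ℤ
    | .x _ => 1
    | .y _ => 0
  refine exists_iterate_derivation_eq_zero (w := xWeight) ?_ ?_ p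
  · rintro (i | i) <;> simp [xWeight]
  · rintro (i | i)
    · by_cases hi : i ∈ J
      · simpa [hi] using! isWeightedHomogeneous_X k xWeight (.y i)
      · simpa [hi] using isWeightedHomogeneous_zero k _ _
    · simpa using isWeightedHomogeneous_zero k _ _

lemma weight_pairWeight (m : PairVar ι →₀ ℕ) :
    Finsupp.weight (pairWeight J) m =
      (∑ j ∈ J, m (.x j) : ℕ) - (∑ j ∈ J, m (.y j) : ℕ) := by
  induction m using Finsupp.induction_linear with
  | zero => simp
  | add m m' ih ih' =>
    simp only [map_add, ih, ih', Finsupp.add_apply, Finset.sum_add_distrib, Nat.cast_add]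
    ring
  | single i n =>
    classical
    rcases i with i | i <;> by_cases hi : i ∈ J <;>
      simp [Finsupp.weight_single, pairWeight, Finsupp.single_apply, hi]

variable {k J} [IsDomain k] [CharZero k] {m : PairVar ι →₀ ℕ} {p : MvPolynomial (PairVar ι) k}

lemma add_sum_y_le_sum_x_of_iterate_raising_eq_zero {n : ℕ} (hp : (raising k J)^[n + 1] p = 0)
    (hm : coeff m ((raising k J)^[n] p) ≠ 0) :
    n + ∑ j ∈ J, m (.y j) ≤ ∑ j ∈ J, m (.x j) := by
  by_contra! hlt
  obtain ⟨μ, hweight, hnμ⟩ : ∃ μ : ℕ, Finsupp.weight (pairWeight J) m = -μ + n • 2 ∧ n < μ := by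
    rw [weight_pairWeight, nsmul_eq_mul]
    exact ⟨2 * n + ∑ j ∈ J, m (.y j) - ∑ j ∈ J, m (.x j), by omega, by omega⟩
  set q := weightedHomogeneousComponent (pairWeight J) (-μ) p
  have iterate_q : ∀ N : ℕ, (raising k J)^[N] q =
      weightedHomogeneousComponent (pairWeight J) (-μ + N • 2) ((raising k J)^[N] p) :=
    iterate_derivation_weightedHomogeneousComponent (isWeightedHomogeneous_raising_X k J) p _
  have hq_weight : weightDerivation k (pairWeight J) q = -(μ : k) • q := by
    simpa using
      weightDerivation_apply (weightedHomogeneousComponent_isWeightedHomogeneous (-μ : ℤ) p)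
  obtain ⟨N, hN⟩ := exists_iterate_lowering_eq_zero k J q
  have hq_zero : q = 0 := eq_zero_of_iterate_lie_eq_zero (lie_raising_lowering k J)
    (lie_weightDerivation_raising k J) (lie_weightDerivation_lowering k J) hq_weight hnμ
    ((iterate_q (n + 1)).trans (by rw [hp, map_zero])) hN
  refine hm ?_
  rw [← coeff_weightedHomogeneousComponent_weight (pairWeight J), hweight, ← iterate_q, hq_zero,
    iterate_map_zero, coeff_zero]

end Raising

section Ballot

variable {ι k : Type*} [LinearOrder ι] [CommRing k] {J : Finset ι} {b : ι}
  {m m₀ : PairVar ι →₀ ℕ} {p : MvPolynomial (PairVar ι) k}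

lemma raising_insert (hb : b ∉ J) :
    raising k (insert b J) =
      raising k J + (X (.x b) : MvPolynomial (PairVar ι) k) • pderiv (.y b) := by
  refine derivation_ext ?_
  rintro (i | i)
  · simp [pderiv_X]
  · rcases eq_or_ne i b with rfl | hi <;> simp [pderiv_X, *]

lemma commute_raising_pderiv_y (J : Finset ι) (b : ι) :
    Function.Commute (raising k J) (pderiv (.y b)) := by
  have hlie : ⁅raising k J, pderiv (R := k) (PairVar.y b)⁆ = 0 := by
    refine derivation_ext ?_
    rintro (i | i) <;> by_cases hi : i ∈ J <;>
      simp [Derivation.commutator_apply, pderiv_X, Pi.single_apply, apply_ite, hi]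
  intro q
  rw [← sub_eq_zero, ← Derivation.commutator_apply, hlie, Derivation.zero_apply]

lemma raising_eq_neg_x_mul_pderiv (hb : b ∉ J) (hp : raising k (insert b J) p = 0) :
    raising k J p = -X (.x b) * pderiv (.y b) p := by
  rw [raising_insert hb] at hp
  simpa using eq_neg_of_add_eq_zero_left hp

lemma raising_iterate_pderiv_eq_zero {n : ℕ} (hb : b ∉ J) (hp : raising k (insert b J) p = 0)
    (hpb : (pderiv (.y b))^[n + 1] p = 0) : raising k J ((pderiv (.y b))^[n] p) = 0 := by
  rw [derivation_iterate_of_derivation_eq_mul (commute_raising_pderiv_y J b) (by simp [pderiv_X])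
    (raising_eq_neg_x_mul_pderiv hb hp), hpb, mul_zero]

/-- The `y`-exponents of `m₀` with indices in `J` are the largest ones among the monomials of `p`
for the lexicographic comparison in which larger indices are more significant. -/
structure IsYLeading (J : Finset ι) (p : MvPolynomial (PairVar ι) k) (m₀ : PairVar ι →₀ ℕ) :
    Prop where
  coeff_ne_zero : coeff m₀ p ≠ 0
  le : ∀ m, coeff m p ≠ 0 → ∀ c ∈ J, (∀ j ∈ J, c < j → m (.y j) = m₀ (.y j)) →
    m (.y c) ≤ m₀ (.y c)

namespace IsYLeading

lemma le_of_forall_lt (h : IsYLeading (insert b J) p m₀) (hb : ∀ j ∈ J, j < b)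
    (hm : coeff m p ≠ 0) : m (.y b) ≤ m₀ (.y b) :=
  h.le m hm b (Finset.mem_insert_self b J) fun j hj hbj => by
    rcases Finset.mem_insert.1 hj with rfl | hj
    · exact absurd hbj (lt_irrefl _)
    · exact absurd hbj (hb j hj).not_gt

variable [IsDomain k] [CharZero k]

lemma iterate_pderiv_eq_zero (h : IsYLeading (insert b J) p m₀) (hb : ∀ j ∈ J, j < b) :
    (pderiv (.y b))^[m₀ (.y b) + 1] p = 0 := by
  ext m
  by_contra hm
  have := h.le_of_forall_lt hb (coeff_iterate_pderiv_ne_zero_iff.1 hm)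
  simp only [Finsupp.add_apply, Finsupp.single_eq_same] at this
  omega

lemma iterate_pderiv (h : IsYLeading (insert b J) p m₀) (hb : ∀ j ∈ J, j < b) :
    IsYLeading J ((pderiv (.y b))^[m₀ (.y b)] p) (m₀.erase (.y b)) where
  coeff_ne_zero := by
    rw [coeff_iterate_pderiv_ne_zero_iff, Finsupp.erase_add_single]
    exact h.coeff_ne_zero
  le m hm c hc heq := by
    rw [coeff_iterate_pderiv_ne_zero_iff] at hm
    have hmb := h.le_of_forall_lt hb hm
    have hne : ∀ j ∈ J, (PairVar.y j) ≠ .y b := fun j hj => by simpa using (hb j hj).ne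
    have hle := h.le _ hm c (Finset.mem_insert_of_mem hc) fun j hj hcj => by
      rcases Finset.mem_insert.1 hj with rfl | hj
      · simp_all
      · simpa [hne j hj] using heq j hj hcj
    simpa [hne c hc] using hle

end IsYLeading

variable [IsDomain k] [CharZero k]

lemma add_sum_y_le_sum_x_of_raising_insert_eq_zero {n : ℕ} (hb : b ∉ J)
    (hp : raising k (insert b J) p = 0) (hpb : (pderiv (.y b))^[n + 1] p = 0)
    (hm : coeff m ((pderiv (.y b))^[n] p) ≠ 0) :
    n + ∑ j ∈ J, m (.y j) ≤ ∑ j ∈ J, m (.x j) := by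
  have hiter : ∀ N, (raising k J)^[N] p = (-X (.x b)) ^ N * (pderiv (.y b))^[N] p :=
    iterate_derivation_of_derivation_eq_mul (commute_raising_pderiv_y J b) (by simp)
      (by simp [pderiv_X]) (raising_eq_neg_x_mul_pderiv hb hp)
  have hcoeff : coeff (m + Finsupp.single (.x b) n) ((raising k J)^[n] p) ≠ 0 := by
    rw [hiter, neg_pow, ← C_1, ← C_neg, ← C_pow, mul_assoc, coeff_C_mul, X_pow_eq_monomial,
      add_comm m, coeff_monomial_mul]
    simpa using hm
  have hx : ∀ j ∈ J, Finsupp.single (PairVar.x b) n (.x j) = 0 := fun j hj =>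
    Finsupp.single_eq_of_ne (by simpa using ne_of_mem_of_not_mem hj hb)
  simpa [Finset.sum_add_distrib, Finset.sum_eq_zero hx] using
    add_sum_y_le_sum_x_of_iterate_raising_eq_zero (by rw [hiter, hpb, mul_zero]) hcoeff

theorem IsYLeading.sum_y_le_sum_x (hp : raising k J p = 0) (h : IsYLeading J p m₀) {c : ι}
    (hc : c ∈ J) : ∑ j ∈ J with j ≤ c, m₀ (.y j) ≤ ∑ j ∈ J with j < c, m₀ (.x j) := by
  induction J using Finset.induction_on_max generalizing p m₀ with
  | empty => simp at hc
  | insert b J hb ih =>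
    have hbJ : b ∉ J := fun hbJ => lt_irrefl b (hb b hbJ)
    have hpb := h.iterate_pderiv_eq_zero hb
    have hlead := h.iterate_pderiv hb
    have hy : ∀ j ∈ J, m₀.erase (.y b) (.y j) = m₀ (.y j) := fun j hj =>
      Finsupp.erase_ne (by simpa using (hb j hj).ne)
    have hx : ∀ j, m₀.erase (.y b) (.x j) = m₀ (.x j) := fun j => Finsupp.erase_ne (by simp)
    rcases Finset.mem_insert.1 hc with rfl | hcJ
    · have hle := add_sum_y_le_sum_x_of_raising_insert_eq_zero hbJ hp hpb hlead.coeff_ne_zero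
      have filter_le : {j ∈ insert c J | j ≤ c} = insert c J :=
        Finset.filter_true_of_mem fun j hj => by
          rcases Finset.mem_insert.1 hj with rfl | hj
          exacts [le_rfl, (hb j hj).le]
      have filter_lt : {j ∈ insert c J | j < c} = J := by
        rw [Finset.filter_insert, if_neg (lt_irrefl c), Finset.filter_true_of_mem hb]
      rw [filter_le, filter_lt, Finset.sum_insert hbJ]
      simpa only [hx, Finset.sum_congr rfl hy] using hle
    · have hle := ih (raising_iterate_pderiv_eq_zero hbJ hp hpb) hlead hcJ
      rw [Finset.filter_insert, if_neg (hb c hcJ).not_ge, Finset.filter_insert,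
        if_neg (hb c hcJ).not_gt]
      simpa only [hx, Finset.sum_congr rfl fun j hj => hy j (Finset.mem_filter.1 hj).1] using hle

end Ballot

section MonomialOrder

open scoped MonomialOrder

variable {σ τ k : Type*} [Field k] (ord : MonomialOrder σ) {f : τ → MvPolynomial σ k}

theorem linearIndependent_of_degree_injective (hf : ∀ t, f t ≠ 0)
    (hdeg : Function.Injective fun t => ord.degree (f t)) : LinearIndependent k f := by
  rw [linearIndependent_iff']
  classical
  by_contra! ⟨s, g, hsum, i₀, hi₀, hgi₀⟩
  obtain ⟨i, hi, hmax⟩ := {i ∈ s | g i ≠ 0}.exists_max_image (fun i => ord.toSyn (ord.degree (f i)))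
    ⟨i₀, Finset.mem_filter.2 ⟨hi₀, hgi₀⟩⟩
  obtain ⟨his, hgi⟩ := Finset.mem_filter.1 hi
  have hcoeff : coeff (ord.degree (f i)) (∑ j ∈ s, g j • f j) = g i * ord.leadingCoeff (f i) := by
    rw [coeff_sum]
    refine (Finset.sum_eq_single_of_mem i his fun j hj hji => ?_).trans (coeff_smul ..)
    rcases eq_or_ne (g j) 0 with hgj | hgj
    · simp [hgj]
    · have hlt : ord.degree (f j) ≺[ord] ord.degree (f i) :=
        (hmax j (Finset.mem_filter.2 ⟨hj, hgj⟩)).lt_of_ne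
          fun heq => hji (hdeg (ord.toSyn.injective heq))
      rw [coeff_smul, ord.coeff_eq_zero_of_lt hlt, smul_zero]
  rw [hsum, coeff_zero, zero_eq_mul, ord.leadingCoeff_eq_zero_iff] at hcoeff
  exact hcoeff.elim hgi (hf i)

lemma exists_eq_zero_or_degree_sub_smul_lt {p q : MvPolynomial σ k} (hq : q ≠ 0)
    (hdeg : ord.degree q = ord.degree p) :
    ∃ c : k, p - c • q = 0 ∨ ord.degree (p - c • q) ≺[ord] ord.degree p := by
  refine ⟨ord.leadingCoeff p / ord.leadingCoeff q, or_iff_not_imp_left.2 fun hne => ?_⟩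
  set r := p - (ord.leadingCoeff p / ord.leadingCoeff q) • q
  have hr : coeff (ord.degree p) r = 0 := by
    have hcoeff : coeff (ord.degree p) q = ord.leadingCoeff q := by rw [← hdeg]; rfl
    rw [coeff_sub, coeff_smul, hcoeff, smul_eq_mul,
      div_mul_cancel₀ _ (ord.leadingCoeff_ne_zero_iff.2 hq)]
    exact sub_self _
  have hle : ord.degree r ≼[ord] ord.degree p :=
    ord.degree_sub_le.trans (sup_le le_rfl (hdeg ▸ ord.degree_smul_le))
  refine hle.lt_of_ne fun heq => ord.coeff_degree_ne_zero_iff.2 hne ?_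
  rw [ord.toSyn.injective heq, hr]

theorem span_range_eq_of_forall_exists_degree_eq (hf : ∀ t, f t ≠ 0)
    {N : Submodule k (MvPolynomial σ k)} (hfN : ∀ t, f t ∈ N)
    (hN : ∀ p ∈ N, p ≠ 0 → ∃ t, ord.degree (f t) = ord.degree p) :
    Submodule.span k (Set.range f) = N := by
  refine le_antisymm (Submodule.span_le.2 (Set.range_subset_iff.2 hfN)) fun p hp => ?_
  induction hdeg : ord.toSyn (ord.degree p) using WellFoundedLT.induction generalizing p with
  | ind _ ih =>
  subst hdeg
  rcases eq_or_ne p 0 with rfl | hp0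
  · exact zero_mem _
  obtain ⟨t, ht⟩ := hN p hp hp0
  have hft := Submodule.subset_span (R := k) (Set.mem_range_self (f := f) t)
  obtain ⟨c, hc⟩ := exists_eq_zero_or_degree_sub_smul_lt ord (hf t) ht
  have hrem : p - c • f t ∈ Submodule.span k (Set.range f) := by
    rcases hc with hzero | hlt
    · rw [hzero]
      exact zero_mem _
    · exact ih _ hlt _ (sub_mem hp (N.smul_mem c (hfN t))) rfl
  simpa using add_mem hrem (Submodule.smul_mem _ c hft)

end MonomialOrder

section EndpointExponent

variable {ι : Type*} [LinearOrder ι]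

/-- The exponent of the monomial `∏ a ∈ A, x a * ∏ b ∈ B, y b`. -/
noncomputable def endpointExponent (A B : Multiset ι) : PairVar ι →₀ ℕ :=
  Multiset.toFinsupp (A.map .x + B.map .y)

@[simp]
lemma endpointExponent_x (A B : Multiset ι) (i : ι) : endpointExponent A B (.x i) = A.count i := by
  have hB : (B.map PairVar.y).count (.x i) = 0 := Multiset.count_eq_zero.2 (by simp)
  rw [endpointExponent, Multiset.toFinsupp_apply, Multiset.count_add, hB, add_zero,
    Multiset.count_map_eq_count' _ _ PairVar.x_injective]

@[simp]
lemma endpointExponent_y (A B : Multiset ι) (i : ι) : endpointExponent A B (.y i) = B.count i := by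
  have hA : (A.map PairVar.x).count (.y i) = 0 := Multiset.count_eq_zero.2 (by simp)
  rw [endpointExponent, Multiset.toFinsupp_apply, Multiset.count_add, hA, zero_add,
    Multiset.count_map_eq_count' _ _ PairVar.y_injective]

lemma endpointExponent_inj {A A' B B' : Multiset ι} :
    endpointExponent A B = endpointExponent A' B' ↔ A = A' ∧ B = B' := by
  refine ⟨fun h => ⟨Multiset.ext' fun i => ?_, Multiset.ext' fun i => ?_⟩, ?_⟩
  · simpa using DFunLike.congr_fun h (.x i)
  · simpa using DFunLike.congr_fun h (.y i)
  · rintro ⟨rfl, rfl⟩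
    rfl

lemma exists_endpointExponent_eq (m : PairVar ι →₀ ℕ) : ∃ A B, endpointExponent A B = m := by
  refine ⟨(m.comapDomain .x PairVar.x_injective.injOn).toMultiset,
    (m.comapDomain .y PairVar.y_injective.injOn).toMultiset, ?_⟩
  ext (i | i) <;> simp [Finsupp.count_toMultiset]

lemma endpointExponent_add (A A' B B' : Multiset ι) :
    endpointExponent (A + A') (B + B') = endpointExponent A B + endpointExponent A' B' := by
  ext (i | i) <;> simp

lemma sum_count_filter_univ [Fintype ι] (A : Multiset ι) (P : ι → Prop) [DecidablePred P] :
    ∑ i with P i, A.count i = A.countP P := by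
  rw [Multiset.countP_eq_card_filter, ← Multiset.sum_count_eq_card (s := Finset.univ) (by simp),
    Finset.sum_filter]
  simp only [Multiset.count_filter]

end EndpointExponent

lemma derivation_multiset_prod_eq_zero {R A : Type*} [CommRing R] [CommRing A] [Algebra R A]
    {D : Derivation R A A} {s : Multiset A} (hs : ∀ a ∈ s, D a = 0) : D s.prod = 0 := by
  induction s using Multiset.induction_on with
  | empty => simp
  | cons a s ih =>
    simp [hs a (Multiset.mem_cons_self a s), ih fun b hb => hs b (Multiset.mem_cons_of_mem hb)]

section Bracket

variable {ι : Type*} (k : Type*) [Field k]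

/-- The minor on the columns `p.1`, `p.2` of the matrix with rows `x` and `y`; the factors `α`, `β`
and `γ` are all of this form. -/
noncomputable def bracket (p : ι × ι) : MvPolynomial (PairVar ι) k :=
  X (.x p.1) * X (.y p.2) - X (.y p.1) * X (.x p.2)

/-- The product of the brackets and of the `x i` for the free points `i`. -/
noncomputable def bracketProd (brackets : Multiset (ι × ι)) (free : Multiset ι) :
    MvPolynomial (PairVar ι) k :=
  (brackets.map (bracket k)).prod * (free.map fun i => X (.x i)).prod

lemma bracketProd_cons (p : ι × ι) (brackets : Multiset (ι × ι)) (free : Multiset ι) :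
    bracketProd k (p ::ₘ brackets) free = bracket k p * bracketProd k brackets free := by
  rw [bracketProd, bracketProd, Multiset.map_cons, Multiset.prod_cons, mul_assoc]

lemma bracket_ne_zero {p : ι × ι} (hp : p.1 ≠ p.2) : bracket k p ≠ 0 := fun h => by
  classical
  let point : PairVar ι → k
    | .x i => if i = p.1 then 1 else 0
    | .y i => if i = p.2 then 1 else 0
  have heval : eval point (bracket k p) = 1 := by simp [bracket, point, hp]
  simp [h] at heval

lemma bracketProd_ne_zero {brackets : Multiset (ι × ι)} (h : ∀ p ∈ brackets, p.1 ≠ p.2)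
    (free : Multiset ι) : bracketProd k brackets free ≠ 0 := by
  refine mul_ne_zero (Multiset.prod_ne_zero ?_) (Multiset.prod_ne_zero ?_)
  · simpa using fun i j hij => bracket_ne_zero k (h (i, j) hij)
  · simp

variable [Fintype ι] [DecidableEq ι]

lemma raising_bracket (p : ι × ι) : raising k Finset.univ (bracket k p) = 0 := by
  simp [bracket, mul_comm]

lemma raising_bracketProd (brackets : Multiset (ι × ι)) (free : Multiset ι) :
    raising k Finset.univ (bracketProd k brackets free) = 0 := by
  rw [bracketProd, ← Multiset.prod_add]
  refine derivation_multiset_prod_eq_zero fun a ha => ?_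
  rcases Multiset.mem_add.1 ha with ha | ha <;> obtain ⟨i, -, rfl⟩ := Multiset.mem_map.1 ha
  exacts [raising_bracket k i, raising_x k _ i]

end Bracket

section LexDegree

open scoped MonomialOrder

variable {ι : Type*} [Finite ι] [LinearOrder ι] {k : Type*} [Field k]

lemma lex_lt_of_forall_y_eq {m m' : PairVar ι →₀ ℕ} {c : ι} (hlt : m (.y c) < m' (.y c))
    (heq : ∀ j, c < j → m (.y j) = m' (.y j)) : m ≺[MonomialOrder.lex] m' := by
  rw [MonomialOrder.lex_lt_iff, Finsupp.Lex.lt_iff]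
  refine ⟨.y c, fun a ha => ?_, hlt⟩
  obtain ⟨j, hj, rfl⟩ := PairVar.lt_y_iff.1 ha
  exact heq j hj

lemma isYLeading_lex_degree {J : Finset ι} (hJ : ∀ i, i ∈ J) {p : MvPolynomial (PairVar ι) k}
    (hp : p ≠ 0) : IsYLeading J p (MonomialOrder.lex.degree p) where
  coeff_ne_zero := MonomialOrder.coeff_degree_ne_zero_iff.2 hp
  le m hm c _ heq := by
    by_contra! hlt
    exact (MonomialOrder.le_degree (mem_support_iff.2 hm)).not_gt
      (lex_lt_of_forall_y_eq hlt fun j hj => (heq j (hJ j) hj).symm)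

lemma lex_degree_bracket {p : ι × ι} (hp : p.1 < p.2) :
    MonomialOrder.lex.degree (bracket k p) = endpointExponent {p.1} {p.2} := by
  have hX : ∀ a b : PairVar ι, MonomialOrder.lex.degree (X a * X b : MvPolynomial (PairVar ι) k) =
      Finsupp.single a 1 + Finsupp.single b 1 := fun a b => by
    rw [MonomialOrder.degree_mul (X_ne_zero a) (X_ne_zero b), MonomialOrder.degree_X,
      MonomialOrder.degree_X]
  rw [bracket, MonomialOrder.degree_sub_of_lt, hX]
  · simp [endpointExponent, -Multiset.singleton_add]
  · rw [hX, hX]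
    refine lex_lt_of_forall_y_eq (c := p.2) ?_ fun j hj => ?_
    · simp [hp.ne]
    · simp [hj.ne, (hp.trans hj).ne]

lemma lex_degree_prod_X_x (free : Multiset ι) :
    MonomialOrder.lex.degree (free.map fun i => (X (.x i) : MvPolynomial (PairVar ι) k)).prod =
      endpointExponent free 0 := by
  induction free using Multiset.induction_on with
  | empty => simp [endpointExponent]
  | cons i free ih =>
    rw [Multiset.map_cons, Multiset.prod_cons, MonomialOrder.degree_mul (X_ne_zero _)
      (Multiset.prod_ne_zero (by simp)), ih, MonomialOrder.degree_X]
    simp [endpointExponent, ← Multiset.singleton_add]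

lemma lex_degree_bracketProd {brackets : Multiset (ι × ι)} (h : ∀ p ∈ brackets, p.1 < p.2)
    (free : Multiset ι) :
    MonomialOrder.lex.degree (bracketProd k brackets free) =
      endpointExponent (brackets.map Prod.fst + free) (brackets.map Prod.snd) := by
  induction brackets using Multiset.induction_on with
  | empty => simpa [bracketProd] using lex_degree_prod_X_x free
  | cons p brackets ih =>
    simp only [Multiset.forall_mem_cons] at h
    rw [bracketProd_cons, MonomialOrder.degree_mul (bracket_ne_zero k h.1.ne)
      (bracketProd_ne_zero k (fun q hq => (h.2 q hq).ne) free), lex_degree_bracket h.1, ih h.2,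
      ← endpointExponent_add]
    simp

lemma lex_degree_bracketProd_inj {brackets brackets' : Multiset (ι × ι)} {free free' : Multiset ι}
    (h : IsNoncrossing brackets free) (h' : IsNoncrossing brackets' free') :
    MonomialOrder.lex.degree (bracketProd k brackets free) =
        MonomialOrder.lex.degree (bracketProd k brackets' free') ↔
      brackets = brackets' ∧ free = free' := by
  rw [lex_degree_bracketProd h.fst_lt_snd, lex_degree_bracketProd h'.fst_lt_snd,
    endpointExponent_inj]
  refine ⟨fun hAB => h.eq_of_endpoints_eq h' hAB.1 hAB.2, ?_⟩
  rintro ⟨rfl, rfl⟩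
  exact ⟨rfl, rfl⟩

end LexDegree

section KernelBasis

variable {ι : Type*} [LinearOrder ι] (k : Type*) [Field k]

variable (ι) in
/-- The noncrossing configurations on `ι`, as pairs of the brackets and the free points. -/
abbrev NoncrossingConfig : Type _ :=
  {c : Multiset (ι × ι) × Multiset ι // IsNoncrossing c.1 c.2}

theorem linearIndependent_bracketProd [Finite ι] :
    LinearIndependent k fun c : NoncrossingConfig ι => bracketProd k c.1.1 c.1.2 := by
  refine linearIndependent_of_degree_injective MonomialOrder.lex
    (fun c => bracketProd_ne_zero k (fun p hp => (c.2.fst_lt_snd p hp).ne) _) fun c c' h => ?_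
  obtain ⟨hbrackets, hfree⟩ := (lex_degree_bracketProd_inj c.2 c'.2).1 h
  exact Subtype.ext (Prod.ext hbrackets hfree)

variable [Fintype ι] {k} [CharZero k]

theorem exists_lex_degree_bracketProd_eq {p : MvPolynomial (PairVar ι) k} (hp : p ≠ 0)
    (hker : raising k Finset.univ p = 0) :
    ∃ c : NoncrossingConfig ι,
      MonomialOrder.lex.degree (bracketProd k c.1.1 c.1.2) = MonomialOrder.lex.degree p := by
  obtain ⟨A, B, hAB⟩ := exists_endpointExponent_eq (MonomialOrder.lex.degree p)
  have hballot : ∀ c, B.countP (· ≤ c) ≤ A.countP (· < c) := fun c => by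
    simpa only [← hAB, endpointExponent_x, endpointExponent_y, sum_count_filter_univ] using
      (isYLeading_lex_degree Finset.mem_univ hp).sum_y_le_sum_x hker (Finset.mem_univ c)
  obtain ⟨brackets, free, h, hA, hB⟩ := exists_isNoncrossing_of_countP_le hballot
  exact ⟨⟨(brackets, free), h⟩, by rw [lex_degree_bracketProd h.fst_lt_snd, hA, hB, hAB]⟩

variable (k)

theorem span_range_bracketProd :
    Submodule.span k (Set.range fun c : NoncrossingConfig ι => bracketProd k c.1.1 c.1.2) =
      LinearMap.ker (raising k (Finset.univ : Finset ι)).toLinearMap :=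
  span_range_eq_of_forall_exists_degree_eq MonomialOrder.lex
    (fun c => bracketProd_ne_zero k (fun p hp => (c.2.fst_lt_snd p hp).ne) _)
    (fun _ => raising_bracketProd k _ _)
    fun _ hker hp => exists_lex_degree_bracketProd_eq hp hker

end KernelBasis

section Transport

variable {K d}

lemma eq_and_eq_of_map_add_eq_map_add {σ τ : Type*} {f : σ → τ} (hf : Function.Injective f)
    {s s' : Multiset σ} {t t' : Multiset τ} (ht : ∀ a, f a ∉ t) (ht' : ∀ a, f a ∉ t')
    (h : s.map f + t = s'.map f + t') : s = s' ∧ t = t' := by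
  classical
  have hs : s = s' := Multiset.ext' fun a => by
    simpa [Multiset.count_map_eq_count' f _ hf, ht a, ht' a] using
      congr_arg (Multiset.count (f a)) h
  subst hs
  exact ⟨rfl, add_left_cancel h⟩

lemma map_derivation_of_forall_X {R σ A : Type*} [CommRing R] [CommRing A] [Algebra R A]
    {φ : MvPolynomial σ R →ₐ[R] A} {D : Derivation R (MvPolynomial σ R) (MvPolynomial σ R)}
    {D' : Derivation R A A} (hX : ∀ i, φ (D (X i)) = D' (φ (X i))) (p : MvPolynomial σ R) :
    φ (D p) = D' (φ p) := by
  induction p using MvPolynomial.induction_on with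
  | C a => simp [← MvPolynomial.algebraMap_eq]
  | add p q hp hq => simp only [map_add, hp, hq]
  | mul_X p i hp => simp only [Derivation.leibniz, smul_eq_mul, map_add, map_mul, hp, hX]

/-- The real interval of a bracket, the points `0, 1, …` being placed at `1, 2, …`. -/
def bracketInterval {n : ℕ} (p : Fin n × Fin n) : ℕ × ℕ := (p.1 + 1, p.2 + 1)

lemma intersects_bracketInterval_iff {n : ℕ} {p q : Fin n × Fin n} :
    Intersects (bracketInterval p) (bracketInterval q) ↔
      (p.1 < q.1 ∧ q.1 < p.2 ∧ p.2 < q.2) ∨ (q.1 < p.1 ∧ p.1 < q.2 ∧ q.2 < p.2) := by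
  simp only [Intersects, Meets, Inside, bracketInterval, Fin.lt_def]
  omega

lemma isNoncrossing_iff {n : ℕ} {brackets : Multiset (Fin n × Fin n)} {free : Multiset (Fin n)} :
    IsNoncrossing brackets free ↔ (∀ p ∈ brackets, p.1 < p.2) ∧
      (∀ I ∈ brackets.map bracketInterval, ∀ J ∈ brackets.map bracketInterval, ¬ Intersects I J) ∧
      ∀ I ∈ brackets.map bracketInterval, ∀ c ∈ free.map (fun i : Fin n => (i : ℕ) + 1),
        ¬ Covers I c := by
  simp only [Multiset.forall_mem_map_iff, intersects_bracketInterval_iff, not_or]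
  have hcover : ∀ (p : Fin n × Fin n) (c : Fin n),
      Covers (bracketInterval p) (c + 1) ↔ p.1 < c ∧ c < p.2 := by
    simp [Covers, bracketInterval]
  simp only [hcover]
  exact ⟨fun h => ⟨h.fst_lt_snd, fun p hp q hq => ⟨h.not_cross p hp q hq, h.not_cross q hq p hp⟩,
    h.not_cover⟩, fun h => ⟨h.1, fun p hp q hq => (h.2.1 p hp q hq).1, h.2.2⟩⟩

/-- The point, among `d + d` points, of the variables `u_{2i-1}` and `u_{2i}`. -/
def uPoint (i : Fin d) : Fin (d + d) := Fin.castAdd d i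

/-- The point, among `d + d` points, of the variables `v_{2i-1}` and `v_{2i}`. -/
def vPoint (i : Fin d) : Fin (d + d) := Fin.natAdd d i

lemma val_uPoint_add_one (i : Fin d) : (uPoint i : ℕ) + 1 = uPt d i := rfl

lemma val_vPoint_add_one (i : Fin d) : (vPoint i : ℕ) + 1 = vPt d i := by
  simp only [vPoint, vPt, Fin.val_natAdd]
  omega

lemma uPoint_strictMono : StrictMono (uPoint (d := d)) := Fin.strictMono_castAdd d

lemma vPoint_strictMono : StrictMono (vPoint (d := d)) := Fin.strictMono_natAdd d

lemma uPoint_lt_vPoint (i j : Fin d) : uPoint i < vPoint j := by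
  simp only [uPoint, vPoint, Fin.lt_def, Fin.val_castAdd, Fin.val_natAdd]
  omega

lemma exists_eq_uPoint_or_exists_eq_vPoint (c : Fin (d + d)) :
    (∃ i, c = uPoint i) ∨ ∃ i, c = vPoint i :=
  Fin.addCases (fun i => .inl ⟨i, rfl⟩) (fun i => .inr ⟨i, rfl⟩) c

/-- The brackets on `d + d` points of the factors `β`, `γ` and `α`. -/
def joinBrackets (betas gammas alphas : Multiset (Fin d × Fin d)) :
    Multiset (Fin (d + d) × Fin (d + d)) :=
  betas.map (Prod.map vPoint vPoint) +
    (gammas.map (Prod.map uPoint vPoint) + alphas.map (Prod.map uPoint uPoint))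

/-- The free points among `d + d` points of the factors `v` and `u`. -/
def joinFree (vs us : Multiset (Fin d)) : Multiset (Fin (d + d)) :=
  vs.map vPoint + us.map uPoint

lemma joinBrackets_inj {b b' g g' a a' : Multiset (Fin d × Fin d)} :
    joinBrackets b g a = joinBrackets b' g' a' ↔ b = b' ∧ g = g' ∧ a = a' := by
  refine ⟨fun h => ?_, by rintro ⟨rfl, rfl, rfl⟩; rfl⟩
  have hu := uPoint_strictMono.injective (α := Fin d)
  have hv := vPoint_strictMono.injective (α := Fin d)
  have hne := fun i j : Fin d => (uPoint_lt_vPoint i j).ne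
  obtain ⟨hb, hga⟩ :=
    eq_and_eq_of_map_add_eq_map_add (hv.prodMap hv) (by simp [hne]) (by simp [hne]) h
  obtain ⟨hg, ha⟩ :=
    eq_and_eq_of_map_add_eq_map_add (hu.prodMap hv) (by simp [hne]) (by simp [hne]) hga
  exact ⟨hb, hg, Multiset.map_injective (hu.prodMap hu) ha⟩

lemma joinFree_inj {s s' t t' : Multiset (Fin d)} :
    joinFree s t = joinFree s' t' ↔ s = s' ∧ t = t' := by
  refine ⟨fun h => ?_, by rintro ⟨rfl, rfl⟩; rfl⟩
  have hne := fun i j : Fin d => (uPoint_lt_vPoint i j).ne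
  obtain ⟨hs, ht⟩ := eq_and_eq_of_map_add_eq_map_add vPoint_strictMono.injective
    (by simp [hne]) (by simp [hne]) h
  exact ⟨hs, Multiset.map_injective uPoint_strictMono.injective ht⟩

lemma exists_joinBrackets_eq {brackets : Multiset (Fin (d + d) × Fin (d + d))}
    (h : ∀ p ∈ brackets, p.1 < p.2) : ∃ b g a, joinBrackets b g a = brackets := by
  induction brackets using Multiset.induction_on with
  | empty => exact ⟨0, 0, 0, rfl⟩
  | cons p brackets ih =>
    simp only [Multiset.forall_mem_cons] at h
    obtain ⟨b, g, a, rfl⟩ := ih h.2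
    obtain ⟨p₁, p₂⟩ := p
    obtain ⟨i, rfl⟩ | ⟨i, rfl⟩ := exists_eq_uPoint_or_exists_eq_vPoint p₁ <;>
      obtain ⟨j, rfl⟩ | ⟨j, rfl⟩ := exists_eq_uPoint_or_exists_eq_vPoint p₂
    · exact ⟨b, g, (i, j) ::ₘ a, by simp [joinBrackets]⟩
    · exact ⟨b, (i, j) ::ₘ g, a, by simp [joinBrackets]⟩
    · exact absurd h.1 (uPoint_lt_vPoint j i).not_gt
    · exact ⟨(i, j) ::ₘ b, g, a, by simp [joinBrackets]⟩

lemma exists_joinFree_eq (free : Multiset (Fin (d + d))) : ∃ s t, joinFree s t = free := by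
  induction free using Multiset.induction_on with
  | empty => exact ⟨0, 0, rfl⟩
  | cons c free ih =>
    obtain ⟨s, t, rfl⟩ := ih
    obtain ⟨i, rfl⟩ | ⟨i, rfl⟩ := exists_eq_uPoint_or_exists_eq_vPoint c
    · exact ⟨s, i ::ₘ t, by simp [joinFree]⟩
    · exact ⟨i ::ₘ s, t, by simp [joinFree]⟩

lemma forall_joinBrackets_fst_lt_snd_iff {b g a : Multiset (Fin d × Fin d)} :
    (∀ p ∈ joinBrackets b g a, p.1 < p.2) ↔
      (∀ pq ∈ b, pq.1 < pq.2) ∧ ∀ pq ∈ a, pq.1 < pq.2 := by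
  simp only [joinBrackets, Multiset.mem_add, or_imp, forall_and, Multiset.forall_mem_map_iff,
    Prod.map_fst, Prod.map_snd, uPoint_strictMono.lt_iff_lt, vPoint_strictMono.lt_iff_lt,
    uPoint_lt_vPoint, implies_true, true_and]

lemma map_bracketInterval_joinBrackets (b g a : Multiset (Fin d × Fin d)) :
    (joinBrackets b g a).map bracketInterval =
      b.map (βInt d) + g.map (γInt d) + a.map (αInt d) := by
  simp only [joinBrackets, Multiset.map_add, Multiset.map_map, Function.comp_def, bracketInterval,
    Prod.map_fst, Prod.map_snd, val_uPoint_add_one, val_vPoint_add_one, add_assoc]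
  rfl

lemma map_val_add_one_joinFree (s t : Multiset (Fin d)) :
    (joinFree s t).map (fun i : Fin (d + d) => (i : ℕ) + 1) = s.map (vPt d) + t.map (uPt d) := by
  simp only [joinFree, Multiset.map_add, Multiset.map_map, Function.comp_def, val_uPoint_add_one,
    val_vPoint_add_one]

lemma isNoncrossing_join_iff {s t : Multiset (Fin d)} {b g a : Multiset (Fin d × Fin d)} :
    IsNoncrossing (joinBrackets b g a) (joinFree s t) ↔
      ((∀ pq ∈ b, pq.1 < pq.2) ∧ ∀ pq ∈ a, pq.1 < pq.2) ∧
      (∀ I ∈ b.map (βInt d) + g.map (γInt d) + a.map (αInt d),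
        ∀ J ∈ b.map (βInt d) + g.map (γInt d) + a.map (αInt d), ¬ Intersects I J) ∧
      ∀ I ∈ b.map (βInt d) + g.map (γInt d) + a.map (αInt d),
        ∀ p ∈ s.map (vPt d) + t.map (uPt d), ¬ Covers I p := by
  rw [isNoncrossing_iff, forall_joinBrackets_fst_lt_snd_iff, map_bracketInterval_joinBrackets,
    map_val_add_one_joinFree]

/-- The brackets and free points of an admissible datum. -/
def Datum.toNoncrossingConfig (t : Datum d) : NoncrossingConfig (Fin (d + d)) :=
  ⟨(joinBrackets t.betas t.gammas t.alphas, joinFree t.vs t.us),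
    isNoncrossing_join_iff.2 ⟨⟨t.betas_lt, t.alphas_lt⟩, t.no_intersect, t.no_cover⟩⟩

lemma Datum.toNoncrossingConfig_bijective :
    Function.Bijective (toNoncrossingConfig (d := d)) := by
  constructor
  · rintro ⟨s, b, g, a, t⟩ ⟨s', b', g', a', t'⟩ h
    obtain ⟨hbrackets, hfree⟩ := Prod.ext_iff.1 (Subtype.ext_iff.1 h)
    obtain ⟨rfl, rfl, rfl⟩ := joinBrackets_inj.1 hbrackets
    obtain ⟨rfl, rfl⟩ := joinFree_inj.1 hfree
    rfl
  · rintro ⟨⟨brackets, free⟩, h⟩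
    obtain ⟨b, g, a, rfl⟩ := exists_joinBrackets_eq h.fst_lt_snd
    obtain ⟨s, t, rfl⟩ := exists_joinFree_eq free
    obtain ⟨hlt, hintersect, hcover⟩ := isNoncrossing_join_iff.1 h
    exact ⟨⟨s, b, g, a, t, hlt.1, hlt.2, hintersect, hcover⟩, rfl⟩

/-- Odd-indexed variables become `x`-variables and even-indexed ones `y`-variables. -/
def toPairVar : (Fin d × Fin 2) ⊕ (Fin d × Fin 2) → PairVar (Fin (d + d))
  | .inl (i, 0) => .x (uPoint i)
  | .inl (i, 1) => .y (uPoint i)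
  | .inr (i, 0) => .x (vPoint i)
  | .inr (i, 1) => .y (vPoint i)

lemma toPairVar_injective : Function.Injective (toPairVar (d := d)) := by
  have hne := fun i j : Fin d => (uPoint_lt_vPoint i j).ne
  have hne' := fun i j : Fin d => (uPoint_lt_vPoint i j).ne'
  rintro (⟨i, a⟩ | ⟨i, a⟩) (⟨j, b⟩ | ⟨j, b⟩) h <;> fin_cases a <;> fin_cases b <;>
    simp_all [toPairVar, uPoint_strictMono.injective.eq_iff, vPoint_strictMono.injective.eq_iff]

lemma toPairVar_surjective : Function.Surjective (toPairVar (d := d)) := by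
  rintro (c | c) <;> obtain ⟨i, rfl⟩ | ⟨i, rfl⟩ := exists_eq_uPoint_or_exists_eq_vPoint c
  exacts [⟨.inl (i, 0), rfl⟩, ⟨.inr (i, 0), rfl⟩, ⟨.inl (i, 1), rfl⟩, ⟨.inr (i, 1), rfl⟩]

variable (K)

lemma rename_toElem (t : Datum d) : rename toPairVar (t.toElem K d) =
    bracketProd K t.toNoncrossingConfig.1.1 t.toNoncrossingConfig.1.2 := by
  simp only [Datum.toElem, bracketProd, Datum.toNoncrossingConfig, joinBrackets, joinFree, map_mul,
    map_multiset_prod, Multiset.map_map, Multiset.map_add, Multiset.prod_add, Function.comp_def,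
    α, β, γ, u, v, map_sub, rename_X, toPairVar, bracket, Prod.map]
  ring

variable {K}

lemma rename_derivation {δS : Derivation K (S K d) (S K d)}
    (hu0 : ∀ i : Fin d, δS (u K d (i, 0)) = 0)
    (hu1 : ∀ i : Fin d, δS (u K d (i, 1)) = u K d (i, 0))
    (hv0 : ∀ i : Fin d, δS (v K d (i, 0)) = 0)
    (hv1 : ∀ i : Fin d, δS (v K d (i, 1)) = v K d (i, 0)) (f : S K d) :
    rename toPairVar (δS f) = raising K Finset.univ (rename toPairVar f) := by
  simp only [u, v] at hu0 hu1 hv0 hv1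
  refine map_derivation_of_forall_X ?_ f
  rintro (⟨i, a⟩ | ⟨i, a⟩) <;> fin_cases a <;> simp [hu0, hu1, hv0, hv1, toPairVar]

end Transport

/-- The admissible products are pairwise distinct and form a `K`-vector space basis of
the algebra of constants `S^δ = ker δ_S`. -/
theorem stmt2 [CharZero K] (hd : 1 ≤ d)
    (δS : Derivation K (S K d) (S K d))
    (hu0 : ∀ i : Fin d, δS (u K d (i, 0)) = 0)
    (hu1 : ∀ i : Fin d, δS (u K d (i, 1)) = u K d (i, 0))
    (hv0 : ∀ i : Fin d, δS (v K d (i, 0)) = 0)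
    (hv1 : ∀ i : Fin d, δS (v K d (i, 1)) = v K d (i, 0)) :
    Function.Injective (Datum.toElem K d) ∧
      LinearIndependent K (Datum.toElem K d) ∧
      Submodule.span K (Set.range (Datum.toElem K d)) = LinearMap.ker δS.toLinearMap := by
  let φ := (rename toPairVar : S K d →ₐ[K] MvPolynomial (PairVar (Fin (d + d))) K).toLinearMap
  have hφ : Function.Bijective φ :=
    ⟨rename_injective _ toPairVar_injective, rename_surjective _ toPairVar_surjective⟩
  have hcomp : φ ∘ Datum.toElem K d =
      (fun c : NoncrossingConfig (Fin (d + d)) => bracketProd K c.1.1 c.1.2) ∘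
        Datum.toNoncrossingConfig :=
    funext (rename_toElem K)
  have hker : LinearMap.ker δS.toLinearMap =
      (LinearMap.ker (raising K Finset.univ).toLinearMap).comap φ :=
    Submodule.ext fun f => by
      rw [Submodule.mem_comap, LinearMap.mem_ker, ← map_eq_zero_iff φ hφ.1]
      exact Eq.congr_left (rename_derivation hu0 hu1 hv0 hv1 f)
  have hli : LinearIndependent K (Datum.toElem K d) := .of_comp φ <| hcomp ▸
    (linearIndependent_bracketProd K).comp _ Datum.toNoncrossingConfig_bijective.1
  refine ⟨hli.injective, hli, Submodule.map_injective_of_injective hφ.1 ?_⟩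
  rw [Submodule.map_span, ← Set.range_comp, hcomp,
    Datum.toNoncrossingConfig_bijective.2.range_comp, span_range_bracketProd, hker,
    Submodule.map_comap_eq_of_surjective hφ.2]

end Stmt2
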